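/- For an integer p ≥ 2, let t = xy, a = (xy)^p v, and b = (xy)^p y in Γ_p. Then the commutator subgroup [Γ_p, Γ_p] equals the subgroup of Γ_p generated by the set of all elements t^k a t^(−k) and t^k b t^(−k) for k ∈ ℤ. -/

import Mathlib

/-- The relators of the group `Γ_p`: in the free group on four generators
`u = 0`, `v = 1`, `x = 2`, `y = 3`, the relators are `u^p v^(p+1)`,
`x^p y^(p+1)`, `(uv)(xy)⁻¹` and `(vu)(yx)⁻¹`. -/
def GammaRels (p : ℕ) : Set (FreeGroup (Fin 4)) :=
  { FreeGroup.of 0 ^ p * FreeGroup.of 1 ^ (p + 1),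
    FreeGroup.of 2 ^ p * FreeGroup.of 3 ^ (p + 1),
    (FreeGroup.of 0 * FreeGroup.of 1) * (FreeGroup.of 2 * FreeGroup.of 3)⁻¹,
    (FreeGroup.of 1 * FreeGroup.of 0) * (FreeGroup.of 3 * FreeGroup.of 2)⁻¹ }

/-- The group `Γ_p = ⟨u, v, x, y | u^p v^(p+1) = 1, x^p y^(p+1) = 1, uv = xy, vu = yx⟩`. -/
abbrev Gamma (p : ℕ) : Type := PresentedGroup (GammaRels p)

/-!
Write `t = xy = uv`. Modulo commutators, `u^p v^(p+1) = (uv)^p v`, so the relators place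
`a = t^p v` and `b = t^p y` in the commutator subgroup, and with them all their conjugates.
Conversely, `t`, `a` and `b` generate the group, so the subgroup generated by the conjugates of `a`
and `b` under powers of `t` is already normal: it is normalized by `t` and contains `a` and `b`.
The quotient by it is generated by the image of `t`, hence abelian.
-/

section Conjugates

variable {G : Type*} [Group G] {H : Subgroup G} {S : Set G}

/-- The set of conjugates `h * s * h⁻¹` with `h ∈ H` and `s ∈ S`. For `H = ⟨t⟩` these are the
elements `t^k s t^(-k)`. -/
def conjugatesUnder (H : Subgroup G) (S : Set G) : Set G :=
  Set.image2 (fun h s ↦ h * s * h⁻¹) H S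

theorem subset_conjugatesUnder : S ⊆ conjugatesUnder H S :=
  fun s hs ↦ ⟨1, H.one_mem, s, hs, by simp⟩

theorem conjugatesUnder_subset {N : Subgroup G} [hN : N.Normal] (hS : S ⊆ N) :
    conjugatesUnder H S ⊆ N :=
  Set.image2_subset_iff.mpr fun h _ s hs ↦ hN.conj_mem s (hS hs) h

theorem conj_mem_conjugatesUnder {h g : G} (hh : h ∈ H) (hg : g ∈ conjugatesUnder H S) :
    h * g * h⁻¹ ∈ conjugatesUnder H S := by
  obtain ⟨k, hk, s, hs, rfl⟩ := hg
  exact ⟨h * k, H.mul_mem hh hk, s, hs, by group⟩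

theorem conjugatesUnder_zpowers_pair (t a b : G) :
    conjugatesUnder (Subgroup.zpowers t) {a, b} =
      {g | ∃ k : ℤ, g = t ^ k * a * t ^ (-k) ∨ g = t ^ k * b * t ^ (-k)} := by
  ext g
  simp [conjugatesUnder, Subgroup.mem_zpowers_iff, eq_comm (a := g), exists_or]

theorem closure_conjugatesUnder_sup_eq_top (hSH : Subgroup.closure S ⊔ H = ⊤) :
    Subgroup.closure (conjugatesUnder H S) ⊔ H = ⊤ :=
  top_unique <| hSH.ge.trans <| sup_le_sup_right (Subgroup.closure_mono subset_conjugatesUnder) H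

theorem normal_closure_conjugatesUnder (hSH : Subgroup.closure S ⊔ H = ⊤) :
    (Subgroup.closure (conjugatesUnder H S)).Normal := by
  rw [← Subgroup.normalizer_eq_top_iff, ← top_le_iff, ← closure_conjugatesUnder_sup_eq_top hSH]
  exact sup_le Subgroup.le_normalizer <| Subgroup.le_normalizer_closure_iff.mpr
    fun h hh g hg ↦ Subgroup.subset_closure (conj_mem_conjugatesUnder hh hg)

theorem commutator_eq_closure_conjugatesUnder [hH : IsMulCommutative H]
    (hSH : Subgroup.closure S ⊔ H = ⊤) (hS : S ⊆ commutator G) :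
    commutator G = Subgroup.closure (conjugatesUnder H S) := by
  have := normal_closure_conjugatesUnder hSH
  apply le_antisymm
  · exact Subgroup.Normal.commutator_le_of_self_sup_commutative_eq_top
      (closure_conjugatesUnder_sup_eq_top hSH) hH
  · exact (Subgroup.closure_le _).mpr (conjugatesUnder_subset hS)

end Conjugates

section Generators

variable {G : Type*} [Group G] {u v x y : G}

theorem mul_pow_mul_mem_commutator_iff {n : ℕ} :
    (u * v) ^ n * v ∈ commutator G ↔ u ^ n * v ^ (n + 1) ∈ commutator G := by
  simp only [← Abelianization.ker_of, MonoidHom.mem_ker, map_mul, map_pow, mul_pow, pow_succ,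
    mul_assoc]

theorem closure_mul_pair_sup_eq_top {H : Subgroup G} {c : G}
    (hgen : Subgroup.closure {u, v, x, y} = ⊤) (hc : c ∈ H) (huv : u * v ∈ H) (hxy : x * y ∈ H) :
    Subgroup.closure {c * v, c * y} ⊔ H = ⊤ := by
  set K := Subgroup.closure {c * v, c * y} ⊔ H
  have hHK : H ≤ K := le_sup_right
  have mem_of_mul_mem {g : G} (hg : c * g ∈ ({c * v, c * y} : Set G)) : g ∈ K :=
    (K.mul_mem_cancel_left (hHK hc)).mp (le_sup_left (a := Subgroup.closure _)
      (Subgroup.subset_closure hg))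
  have hv : v ∈ K := mem_of_mul_mem (by simp)
  have hy : y ∈ K := mem_of_mul_mem (by simp)
  have hu : u ∈ K := (K.mul_mem_cancel_right hv).mp (hHK huv)
  have hx : x ∈ K := (K.mul_mem_cancel_right hy).mp (hHK hxy)
  rw [← top_le_iff, ← hgen, Subgroup.closure_le]
  rintro _ (rfl | rfl | rfl | rfl) <;> assumption

theorem gamma_commutator_eq_closure_general {p : ℕ} (hgen : Subgroup.closure {u, v, x, y} = ⊤)
    (hu : u ^ p * v ^ (p + 1) ∈ commutator G) (hx : x ^ p * y ^ (p + 1) ∈ commutator G)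
    (huv : u * v = x * y) :
    commutator G = Subgroup.closure {g : G | ∃ k : ℤ,
      g = (x * y) ^ k * ((x * y) ^ p * v) * (x * y) ^ (-k) ∨
      g = (x * y) ^ k * ((x * y) ^ p * y) * (x * y) ^ (-k)} := by
  have ht : x * y ∈ Subgroup.zpowers (x * y) := Subgroup.mem_zpowers _
  have ha : (x * y) ^ p * v ∈ commutator G := huv ▸ mul_pow_mul_mem_commutator_iff.mpr hu
  have hb : (x * y) ^ p * y ∈ commutator G := mul_pow_mul_mem_commutator_iff.mpr hx
  rw [← conjugatesUnder_zpowers_pair]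
  apply commutator_eq_closure_conjugatesUnder
  · exact closure_mul_pair_sup_eq_top hgen (pow_mem ht p) (huv ▸ ht) ht
  · exact Set.pair_subset ha hb

end Generators

namespace Gamma

open PresentedGroup

variable (p : ℕ)

theorem closure_generators_eq_top :
    Subgroup.closure {of 0, of 1, of 2, (of 3 : Gamma p)} = ⊤ := by
  rw [← closure_range_of (GammaRels p)]
  congr 1
  ext g
  simp [Fin.exists_fin_succ, eq_comm (b := g)]

theorem of_zero_pow_mul_of_one_pow : (of 0 : Gamma p) ^ p * of 1 ^ (p + 1) = 1 :=
  one_of_mem (rels := GammaRels p) (by simp [GammaRels])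

theorem of_two_pow_mul_of_three_pow : (of 2 : Gamma p) ^ p * of 3 ^ (p + 1) = 1 :=
  one_of_mem (rels := GammaRels p) (by simp [GammaRels])

theorem of_zero_mul_of_one : (of 0 * of 1 : Gamma p) = of 2 * of 3 :=
  mk_eq_mk_of_mul_inv_mem (rels := GammaRels p) (by simp [GammaRels])

end Gamma

/-- For `p ≥ 2`, with `t = xy`, `a = (xy)^p v` and `b = (xy)^p y` in `Γ_p`, the
commutator subgroup `[Γ_p, Γ_p]` is the subgroup generated by the elements
`t^k a t^(−k)` and `t^k b t^(−k)` for `k ∈ ℤ`. -/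
theorem gamma_commutator_eq_closure (p : ℕ) (hp : 2 ≤ p) :
    commutator (Gamma p) =
      Subgroup.closure {g : Gamma p | ∃ k : ℤ,
        g = ((PresentedGroup.of 2 * PresentedGroup.of 3 : Gamma p) ^ k *
              ((PresentedGroup.of 2 * PresentedGroup.of 3 : Gamma p) ^ p *
                PresentedGroup.of 1) *
              (PresentedGroup.of 2 * PresentedGroup.of 3 : Gamma p) ^ (-k)) ∨
        g = ((PresentedGroup.of 2 * PresentedGroup.of 3 : Gamma p) ^ k *
              ((PresentedGroup.of 2 * PresentedGroup.of 3 : Gamma p) ^ p *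
                PresentedGroup.of 3) *
              (PresentedGroup.of 2 * PresentedGroup.of 3 : Gamma p) ^ (-k))} := by
  exact gamma_commutator_eq_closure_general (Gamma.closure_generators_eq_top p)
    (Gamma.of_zero_pow_mul_of_one_pow p ▸ one_mem _)
    (Gamma.of_two_pow_mul_of_three_pow p ▸ one_mem _) (Gamma.of_zero_mul_of_one p)
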